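/- arXiv:1004.2079 — 2 statements merged into one kernel-verified Lean document; each statement's English description precedes it below -/
import Mathlib

section
/- Let G be an exchange network with n nodes for which the LP relaxation of maximum weight matching admits a unique optimum, and this optimum is integral, corresponding to matching M*, with LP gap g > 0. Let α be an ε-fixed point of the natural dynamics for some ε < g/(6n²), with earnings vector γ. Then α induces the matching M*, and (M*, γ) is a 6ε-Nash bargaining solution. Conversely, for any ε > 0, every ε-Nash bargaining solution (M, γ_NB) has M = M*. -/
namespace EN

open Finset

variable {V : Type*}

/-- The nonnegative part `(x)₊ = max (x, 0)`. -/
noncomputable def pos (x : ℝ) : ℝ := max x 0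

variable [Fintype V] [DecidableEq V]

/-- The maximum of `f` over a finite set of vertices (`0` over the empty set). -/
noncomputable def fmax (s : Finset V) (f : V → ℝ) : ℝ := ⨆ k ∈ s, f k

/-- The offer from `i` to `j` given messages `α` and weights `w`:
`m_{i→j} = (w_{ij} − α_{i\j})₊ − (1/2) (w_{ij} − α_{i\j} − α_{j\i})₊`. -/
noncomputable def offer (w α : V → V → ℝ) (i j : V) : ℝ :=
  pos (w i j - α i j) - (1 / 2) * pos (w i j - α i j - α j i)

/-- The update operator `T` of the natural dynamics:
`(Tα)_{i\j} = max_{k ∈ ∂i \ j} m_{k→i}`. -/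
noncomputable def upd (G : SimpleGraph V) [DecidableRel G.Adj] (w α : V → V → ℝ)
    (i j : V) : ℝ :=
  fmax ((G.neighborFinset i).erase j) fun k => offer w α k i

/-- The earnings estimate `γ_i = max_{k ∈ ∂i} m_{k→i}`. -/
noncomputable def earn (G : SimpleGraph V) [DecidableRel G.Adj] (w α : V → V → ℝ)
    (i : V) : ℝ :=
  fmax (G.neighborFinset i) fun k => offer w α k i

/-- Exchange network weights: symmetric and positive on every edge. -/
def GoodW (G : SimpleGraph V) (w : V → V → ℝ) : Prop :=
  (∀ i j, w i j = w j i) ∧ ∀ i j, G.Adj i j → 0 < w i j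

/-- A valid message vector: nonnegative on all directed edges. -/
def ValidMsg (G : SimpleGraph V) (α : V → V → ℝ) : Prop :=
  ∀ i j, G.Adj i j → 0 ≤ α i j

/-- Fixed point of the natural-dynamics update operator. -/
def IsFixedPt (G : SimpleGraph V) [DecidableRel G.Adj] (w α : V → V → ℝ) : Prop :=
  ∀ i j, G.Adj i j → upd G w α i j = α i j

/-- `ε`-fixed point. -/
def IsEpsFixedPt (G : SimpleGraph V) [DecidableRel G.Adj] (w α : V → V → ℝ) (ε : ℝ) : Prop :=
  ∀ i j, G.Adj i j → |α i j - upd G w α i j| ≤ ε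

/-- The natural dynamics with damping factor `κ`: `α^{t+1} = (1−κ) α^t + κ T α^t`. -/
noncomputable def dyn (G : SimpleGraph V) [DecidableRel G.Adj] (w : V → V → ℝ) (κ : ℝ)
    (α0 : V → V → ℝ) : ℕ → V → V → ℝ
  | 0 => α0
  | t + 1 => fun i j =>
      (1 - κ) * dyn G w κ α0 t i j + κ * upd G w (dyn G w κ α0 t) i j

/-- Sup norm over directed edges. -/
noncomputable def msgSup (G : SimpleGraph V) [DecidableRel G.Adj] (f : V → V → ℝ) : ℝ :=
  ⨆ p : V × V, if G.Adj p.1 p.2 then |f p.1 p.2| else 0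

/-- `M` is a matching of `G`: a symmetric subrelation of adjacency pairing each node
with at most one partner. -/
structure IsMatching (G : SimpleGraph V) (M : V → V → Prop) : Prop where
  subset : ∀ i j, M i j → G.Adj i j
  symm : ∀ i j, M i j → M j i
  unique : ∀ i j k, M i j → M i k → j = k

/-- `(M, γ)` is a trade outcome. -/
def IsOutcome (G : SimpleGraph V) (w : V → V → ℝ) (M : V → V → Prop) (γ : V → ℝ) : Prop :=
  IsMatching G M ∧ (∀ i, 0 ≤ γ i) ∧ (∀ i j, M i j → γ i + γ j = w i j) ∧
    ∀ i, (∀ j, ¬M i j) → γ i = 0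

/-- Stability of an outcome. -/
def Stable (G : SimpleGraph V) (w : V → V → ℝ) (M : V → V → Prop) (γ : V → ℝ) : Prop :=
  ∀ i j, G.Adj i j → ¬M i j → w i j ≤ γ i + γ j

/-- The best alternative of `i` excluding `j`: `max_{k ∈ ∂i \ j} (w_{ik} − γ_k)₊`. -/
noncomputable def bestAlt (G : SimpleGraph V) [DecidableRel G.Adj] (w : V → V → ℝ)
    (γ : V → ℝ) (i j : V) : ℝ :=
  fmax ((G.neighborFinset i).erase j) fun k => pos (w i k - γ k)

/-- Balance of an outcome. -/
def Balanced (G : SimpleGraph V) [DecidableRel G.Adj] (w : V → V → ℝ) (M : V → V → Prop)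
    (γ : V → ℝ) : Prop :=
  ∀ i j, M i j → γ i - bestAlt G w γ i j = γ j - bestAlt G w γ j i

/-- Nash bargaining solution: a stable and balanced trade outcome. -/
def IsNBSolution (G : SimpleGraph V) [DecidableRel G.Adj] (w : V → V → ℝ)
    (M : V → V → Prop) (γ : V → ℝ) : Prop :=
  IsOutcome G w M γ ∧ Stable G w M γ ∧ Balanced G w M γ

/-- `ε`-balance. -/
def EpsBalanced (G : SimpleGraph V) [DecidableRel G.Adj] (w : V → V → ℝ)
    (M : V → V → Prop) (γ : V → ℝ) (ε : ℝ) : Prop :=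
  ∀ i j, M i j → |(γ i - bestAlt G w γ i j) - (γ j - bestAlt G w γ j i)| ≤ ε

/-- `ε`-Nash bargaining solution. -/
def IsEpsNB (G : SimpleGraph V) [DecidableRel G.Adj] (w : V → V → ℝ)
    (M : V → V → Prop) (γ : V → ℝ) (ε : ℝ) : Prop :=
  IsOutcome G w M γ ∧ Stable G w M γ ∧ EpsBalanced G w M γ ε

/-- Feasible point of the LP relaxation of maximum weight matching. -/
def LPFeasible (G : SimpleGraph V) [DecidableRel G.Adj] (x : V → V → ℝ) : Prop :=
  (∀ i j, x i j = x j i) ∧ (∀ i j, 0 ≤ x i j) ∧ (∀ i j, ¬G.Adj i j → x i j = 0) ∧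
    ∀ i, ∑ j ∈ G.neighborFinset i, x i j ≤ 1

/-- LP objective `Σ_{(i,j)∈E} w_{ij} x_{ij}` (each undirected edge counted once). -/
noncomputable def LPval (G : SimpleGraph V) [DecidableRel G.Adj] (w x : V → V → ℝ) : ℝ :=
  (1 / 2) * ∑ i, ∑ j ∈ G.neighborFinset i, w i j * x i j

/-- Optimal point of the LP relaxation of maximum weight matching. -/
def LPOptimal (G : SimpleGraph V) [DecidableRel G.Adj] (w x : V → V → ℝ) : Prop :=
  LPFeasible G x ∧ ∀ y, LPFeasible G y → LPval G w y ≤ LPval G w x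

def Integral (x : V → V → ℝ) : Prop := ∀ i j, x i j = 0 ∨ x i j = 1

def HalfIntegral (x : V → V → ℝ) : Prop := ∀ i j, x i j = 0 ∨ x i j = 1 / 2 ∨ x i j = 1

open Classical in
/-- The LP point associated to a matching. -/
noncomputable def mInd (M : V → V → Prop) (i j : V) : ℝ := if M i j then 1 else 0

/-- The state with offers `m` induces the matching `M`: every node receiving a positive
offer is matched and receives its unique best offer from its partner, and every node
with zero earnings is unmatched. -/
def Induces (G : SimpleGraph V) [DecidableRel G.Adj] (m : V → V → ℝ)
    (M : V → V → Prop) : Prop :=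
  IsMatching G M ∧
    (∀ i, (∃ k, G.Adj i k ∧ 0 < m k i) →
      ∃ j, M i j ∧ ∀ k, G.Adj i k → k ≠ j → m k i < m j i) ∧
    ∀ i, (fmax (G.neighborFinset i) fun k => m k i) = 0 → ∀ j, ¬M i j

/-- Feasibility for the dual LP. -/
def DualFeasible (G : SimpleGraph V) (w : V → V → ℝ) (y : V → ℝ) : Prop :=
  (∀ i, 0 ≤ y i) ∧ ∀ i j, G.Adj i j → w i j ≤ y i + y j

/-- Optimality for the dual LP. -/
def DualOptimal (G : SimpleGraph V) (w : V → V → ℝ) (y : V → ℝ) : Prop :=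
  DualFeasible G w y ∧ ∀ z, DualFeasible G w z → ∑ i, y i ≤ ∑ i, z i

/-- The unmatched balance property at every edge. -/
def UnmatchedBalance (G : SimpleGraph V) [DecidableRel G.Adj] (w : V → V → ℝ)
    (y : V → ℝ) : Prop :=
  ∀ i j, G.Adj i j → y i - bestAlt G w y i j = y j - bestAlt G w y j i

/-! ### Unequal division -/

/-- Valid split fractions: `r_{ij} ∈ (0,1)` with `r_{ij} + r_{ji} = 1` on every edge. -/
def GoodR (G : SimpleGraph V) (r : V → V → ℝ) : Prop :=
  ∀ i j, G.Adj i j → 0 < r i j ∧ r i j < 1 ∧ r i j + r j i = 1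

/-- The UD offer from `i` to `j`. -/
noncomputable def offerUD (w r α : V → V → ℝ) (i j : V) : ℝ :=
  pos (w i j - α i j) - r i j * pos (w i j - α i j - α j i)

/-- The UD update operator. -/
noncomputable def updUD (G : SimpleGraph V) [DecidableRel G.Adj] (w r α : V → V → ℝ)
    (i j : V) : ℝ :=
  fmax ((G.neighborFinset i).erase j) fun k => offerUD w r α k i

/-- The UD earnings estimate. -/
noncomputable def earnUD (G : SimpleGraph V) [DecidableRel G.Adj] (w r α : V → V → ℝ)
    (i : V) : ℝ :=
  fmax (G.neighborFinset i) fun k => offerUD w r α k i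

/-- Fixed point of the UD update operator. -/
def IsFixedPtUD (G : SimpleGraph V) [DecidableRel G.Adj] (w r α : V → V → ℝ) : Prop :=
  ∀ i j, G.Adj i j → updUD G w r α i j = α i j

/-- Correct division. -/
def CorrectDiv (G : SimpleGraph V) [DecidableRel G.Adj] (w r : V → V → ℝ)
    (M : V → V → Prop) (γ : V → ℝ) : Prop :=
  ∀ i j, M i j →
    (1 / r i j) * (γ i - bestAlt G w γ i j) = (1 / r j i) * (γ j - bestAlt G w γ j i)

/-- UD solution: a stable trade outcome satisfying correct division. -/
def IsUDSolution (G : SimpleGraph V) [DecidableRel G.Adj] (w r : V → V → ℝ)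
    (M : V → V → Prop) (γ : V → ℝ) : Prop :=
  IsOutcome G w M γ ∧ Stable G w M γ ∧ CorrectDiv G w r M γ

/-- Edge surplus. -/
noncomputable def surp (G : SimpleGraph V) [DecidableRel G.Adj] (w : V → V → ℝ)
    (γ : V → ℝ) (i j : V) : ℝ :=
  w i j - bestAlt G w γ i j - bestAlt G w γ j i

open Classical in
/-- The rebalanced allocation `γ^reb`. -/
noncomputable def reb (G : SimpleGraph V) [DecidableRel G.Adj] (w r : V → V → ℝ)
    (M : V → V → Prop) (γ : V → ℝ) (i : V) : ℝ :=
  if h : ∃ j, M i j then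
    bestAlt G w γ i h.choose + r i h.choose * surp G w γ i h.choose
  else 0

/-- The Edge Rebalancing iteration `γ^{t+1} = κ γ^reb(γ^t) + (1−κ) γ^t`. -/
noncomputable def rebIter (G : SimpleGraph V) [DecidableRel G.Adj] (w r : V → V → ℝ)
    (M : V → V → Prop) (κ : ℝ) (γ0 : V → ℝ) : ℕ → V → ℝ
  | 0 => γ0
  | t + 1 => fun i =>
      κ * reb G w r M (rebIter G w r M κ γ0 t) i + (1 - κ) * rebIter G w r M κ γ0 t i

/-!
A stable outcome is a feasible solution of the dual LP whose value equals the weight of its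
matching, so by weak duality its matching is optimal; this settles the uniqueness of the matching.

For the other direction, perturb the edge weights: reward by `2c` every way in which a permutation
of the nodes can depart from `M*`. A permutation gives a half-integral point of the LP, so as long
as `n c ≤ g` the reward does not outweigh the gap and `M*` remains an optimal assignment. Its dual
prices, symmetrized, form a dual solution `y` that is tight on `M*` and has slack `c` on every other
edge and at every matched node.

Now take an `ε`-fixed point and suppose that some matched node receives, from outside `M*`, an offer
nearly as good as its earnings. Follow alternately such an offer and an edge of `M*`. Every two
steps worsen the near-tie by only `4ε`, while the slack of `y` makes the excess `γ - y` increase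
strictly. Hence no node repeats, and after `n` rounds there is a contradiction provided `6nε < c`.
So offers across `M*` beat all others by more than `2ε`, and both remaining claims follow by local
estimates.
-/

section FiniteMaximum

variable {ι : Type*} {s : Finset ι} {f : ι → ℝ} {B : ℝ} {k : ι}

theorem le_fmax (hk : k ∈ s) : f k ≤ fmax s f := by
  have hbdd : BddAbove (Set.range fun k => ⨆ _ : k ∈ s, f k) := by
    refine ((s.finite_toSet.image f).insert 0).bddAbove.mono ?_
    rintro _ ⟨k, rfl⟩
    by_cases hk : k ∈ s
    · exact Or.inr ⟨k, hk, by simp [hk]⟩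
    · exact Or.inl (by simp [hk])
  exact (ciSup_pos (f := fun _ : k ∈ s => f k) hk).ge.trans (le_ciSup hbdd k)

theorem fmax_le (hB : 0 ≤ B) (h : ∀ k ∈ s, f k ≤ B) : fmax s f ≤ B :=
  Real.iSup_le (fun k => Real.iSup_le (h k) hB) hB

theorem fmax_nonneg (h : ∀ k ∈ s, 0 ≤ f k) : 0 ≤ fmax s f :=
  Real.iSup_nonneg fun k => Real.iSup_nonneg (h k)

theorem exists_eq_fmax_of_pos (h : 0 < fmax s f) : ∃ k ∈ s, f k = fmax s f := by
  classical
  have hpos : ∃ k ∈ s, 0 ≤ f k := by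
    by_contra! hneg
    exact h.not_ge (fmax_le le_rfl fun k hk => (hneg k hk).le)
  exact mem_image.1 (s.ciSup_mem_image f (by simpa using hpos))

end FiniteMaximum

section AscendingChain

variable {ι β : Type*} [Fintype ι] [Preorder β]

/-- Each ascent enlarges the set of elements below the current one, so there are few ascents. -/
theorem exists_lt_card_forall_not_lt (D : ι → β) {P : ℕ → ι → Prop} (h₀ : ∃ v, P 0 v) :
    ∃ t < Fintype.card ι, ∃ v, P t v ∧ ∀ k, P (t + 1) k → ¬D v < D k := by
  classical
  by_contra! hascend
  have below_lt_card (v : ι) : #{u | D u < D v} < Fintype.card ι :=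
    card_lt_univ_of_notMem (x := v) (by simp)
  have below_ge (t : ℕ) : ∃ v, P t v ∧ t ≤ #{u | D u < D v} := by
    induction t with
    | zero => exact h₀.imp fun v hv => ⟨hv, zero_le⟩
    | succ t ih =>
      obtain ⟨v, hv, ht⟩ := ih
      obtain ⟨k, hk, hvk⟩ := hascend t (ht.trans_lt (below_lt_card v)) v hv
      refine ⟨k, hk, ht.trans_lt (card_lt_card ?_)⟩
      refine (ssubset_iff_of_subset fun u hu => ?_).2 ⟨v, by simpa using hvk, by simp⟩
      simp only [mem_filter, mem_univ, true_and] at hu ⊢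
      exact hu.trans hvk
  obtain ⟨v, -, hv⟩ := below_ge (Fintype.card ι)
  exact hv.not_gt (below_lt_card v)

end AscendingChain

section AssignmentDuality

variable {ι A : Type*}

/-- The total weight of the steps of the walk that starts at a given vertex and then visits the
vertices of a list in order. -/
def walkWeight [AddCommMonoid A] (C : ι → ι → A) : ι → List ι → A
  | _, [] => 0
  | i, j :: l => C i j + walkWeight C j l

theorem walkWeight_append_cons [AddCommMonoid A] (C : ι → ι → A) (i a : ι) (l₁ l₂ : List ι) :
    walkWeight C i (l₁ ++ a :: l₂) = walkWeight C i (l₁ ++ [a]) + walkWeight C a l₂ := by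
  induction l₁ generalizing i with
  | nil => simp [walkWeight]
  | cons b l ih => simp [walkWeight, ih, add_assoc]

theorem walkWeight_eq_sum_zipWith [AddCommMonoid A] (C : ι → ι → A) (i : ι) (l : List ι) :
    walkWeight C i l = (List.zipWith C (i :: l) l).sum := by
  induction l generalizing i with
  | nil => simp [walkWeight]
  | cons j l ih => simp [walkWeight, ih]

theorem walkWeight_concat_eq_sum_formPerm [AddCommMonoid A] [DecidableEq ι] (C : ι → ι → A) {i : ι}
    {l : List ι} (hl : (i :: l).Nodup) :
    walkWeight C i (l ++ [i]) = ∑ x ∈ (i :: l).toFinset, C x ((i :: l).formPerm x) := by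
  have hrot : l ++ [i] = (i :: l).rotate 1 := by simp
  have hzip : List.zipWith C (i :: l ++ [i]) (l ++ [i]) = List.zipWith C (i :: l) (l ++ [i]) := by
    have h := List.zipWith_append (f := C) (l₁ := i :: l) (l₁' := [i]) (l₂ := l ++ [i]) (l₂' := [])
      (by simp)
    simpa using h
  rw [walkWeight_eq_sum_zipWith, ← List.cons_append, hzip, List.sum_toFinset _ hl, hrot]
  congr 1
  refine List.ext_getElem (by simp) fun k _ _ => ?_
  simp only [List.getElem_zipWith, List.getElem_map, List.getElem_rotate,
    List.formPerm_apply_getElem _ hl]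

theorem walkWeight_concat_nonpos [Fintype ι] [AddCommMonoid A] [Preorder A] {C : ι → ι → A}
    (hdiag : ∀ i, C i i = 0) (hperm : ∀ π : Equiv.Perm ι, ∑ x, C x (π x) ≤ 0) {i : ι} {l : List ι}
    (hl : (i :: l).Nodup) : walkWeight C i (l ++ [i]) ≤ 0 := by
  classical
  rw [walkWeight_concat_eq_sum_formPerm C hl]
  refine (sum_subset (subset_univ _) fun x _ hx => ?_).trans_le (hperm (i :: l).formPerm)
  rw [List.formPerm_apply_of_notMem (by simpa using hx), hdiag]

theorem exists_walkWeight_maximal [Finite ι] [AddCommMonoid A] [LinearOrder A] (C : ι → ι → A)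
    (i : ι) :
    ∃ l : List ι, (i :: l).Nodup ∧
      ∀ l', (i :: l').Nodup → walkWeight C i l' ≤ walkWeight C i l := by
  classical
  have := Fintype.ofFinite ι
  have hfin : {l : List ι | l.Nodup}.Finite := Finite.of_fintype {l : List ι // l.Nodup}
  exact Set.exists_max_image {l | (i :: l).Nodup} (walkWeight C i)
    (hfin.subset fun _ hl => (List.nodup_cons.1 hl).2) ⟨[], List.nodup_singleton i⟩

variable [AddCommGroup A] [LinearOrder A] [IsOrderedAddMonoid A]

/-- The potential of `i` is the largest weight of a simple walk from `i`. -/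
theorem exists_potential [Fintype ι] {C : ι → ι → A} (hdiag : ∀ i, C i i = 0)
    (hperm : ∀ π : Equiv.Perm ι, ∑ x, C x (π x) ≤ 0) :
    ∃ u : ι → A, ∀ i j, C i j ≤ u i - u j := by
  choose L hL hLmax using exists_walkWeight_maximal C
  refine ⟨fun i => walkWeight C i (L i), fun i j => le_sub_iff_add_le.2 ?_⟩
  by_cases hsimple : (i :: j :: L j).Nodup
  · exact hLmax i (j :: L j) hsimple
  rcases eq_or_ne i j with rfl | hij
  · simp [hdiag]
  have hmem : i ∈ L j := by
    by_contra hi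
    exact hsimple (List.nodup_cons.2 ⟨by simp [hij, hi], hL j⟩)
  obtain ⟨l₁, l₂, hsplit⟩ := List.append_of_mem hmem
  have hnodup : ((j :: l₁) ++ i :: l₂).Nodup := by simpa [hsplit] using hL j
  obtain ⟨hnodup₁, hnodup₂, hdisj⟩ := List.nodup_append.1 hnodup
  have hcycle : C i j + walkWeight C j (l₁ ++ [i]) ≤ 0 :=
    walkWeight_concat_nonpos hdiag hperm
      (List.nodup_cons.2 ⟨fun hi => hdisj i hi i (by simp) rfl, hnodup₁⟩)
  calc C i j + walkWeight C j (L j)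
      = C i j + walkWeight C j (l₁ ++ [i]) + walkWeight C i l₂ := by
        rw [hsplit, walkWeight_append_cons, add_assoc]
    _ ≤ 0 + walkWeight C i (L i) := add_le_add hcycle (hLmax i l₂ hnodup₂)
    _ = walkWeight C i (L i) := zero_add _

theorem exists_assignment_dual [Fintype ι] (C : ι → ι → A) (σ : Equiv.Perm ι)
    (hσ : ∀ π : Equiv.Perm ι, ∑ i, C i (π i) ≤ ∑ i, C i (σ i)) :
    ∃ u v : ι → A, (∀ i j, C i j ≤ u i + v j) ∧ ∀ i, C i (σ i) = u i + v (σ i) := by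
  obtain ⟨u, hu⟩ := exists_potential (C := fun i j => C i (σ j) - C j (σ j)) (by simp) fun π => by
    rw [sum_sub_distrib, Equiv.sum_comp π fun j => C j (σ j), sub_nonpos]
    exact hσ (π.trans σ)
  refine ⟨u, fun j => C (σ.symm j) j - u (σ.symm j), fun i j => ?_, fun i => by simp⟩
  have h : C i j - C (σ.symm j) j ≤ u i - u (σ.symm j) := by simpa using hu i (σ.symm j)
  exact (sub_le_iff_le_add.1 h).trans_eq (by rw [sub_add_eq_add_sub, add_sub_assoc])

end AssignmentDuality

section MatchingLP

variable {V : Type*} {G : SimpleGraph V} {M : V → V → Prop} {w x : V → V → ℝ} {y γ : V → ℝ}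
  {i j : V}

theorem mInd_injective : Function.Injective (mInd (V := V)) := by
  intro M N h
  ext i j
  have hij := congr_fun₂ h i j
  unfold mInd at hij
  by_cases hM : M i j <;> by_cases hN : N i j <;> simp_all

open Classical in
/-- The node matched to `i`, or `i` itself if `i` is unmatched. -/
noncomputable def partner (M : V → V → Prop) (i : V) : V :=
  if h : ∃ j, M i j then h.choose else i

theorem partner_eq_self (hi : ∀ j, ¬M i j) : partner M i = i :=
  dif_neg (not_exists.2 hi)

namespace IsMatching

variable (hM : IsMatching G M)
include hM

theorem partner_eq (hij : M i j) : partner M i = j := by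
  have h : ∃ j, M i j := ⟨j, hij⟩
  rw [partner, dif_pos h]
  exact hM.unique i _ j h.choose_spec hij

theorem partner_eq_iff_of_ne (hij : i ≠ j) : partner M i = j ↔ M i j := by
  refine ⟨fun h => ?_, hM.partner_eq⟩
  by_cases hi : ∃ k, M i k
  · obtain ⟨k, hk⟩ := hi
    rwa [← h, hM.partner_eq hk]
  · exact absurd ((partner_eq_self (not_exists.1 hi)).symm.trans h) hij

theorem partner_involutive : Function.Involutive (partner M) := by
  intro i
  by_cases hi : ∃ j, M i j
  · obtain ⟨j, hij⟩ := hi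
    rw [hM.partner_eq hij, hM.partner_eq (hM.symm i j hij)]
  · have hself := partner_eq_self (not_exists.1 hi)
    rw [hself, hself]

end IsMatching

/-- A matching as a permutation of the nodes, fixing the unmatched ones. -/
noncomputable def IsMatching.partnerPerm (hM : IsMatching G M) : Equiv.Perm V :=
  hM.partner_involutive.toPerm

theorem IsMatching.coe_partnerPerm (hM : IsMatching G M) : ⇑hM.partnerPerm = partner M :=
  rfl

/-- The weight of the edge `ij`, extended by zero to the pairs that are not edges. -/
def edgeWeight (G : SimpleGraph V) [DecidableRel G.Adj] (w : V → V → ℝ) (i j : V) : ℝ :=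
  if G.Adj i j then w i j else 0

open Classical in
/-- The half-integral point of the matching LP given by a permutation of the nodes: every node
contributes `1/2` to the edge that joins it to its image, if there is one. -/
noncomputable def permPoint (G : SimpleGraph V) (π : Equiv.Perm V) (i j : V) : ℝ :=
  if G.Adj i j then ((if π i = j then 1 else 0) + (if π j = i then 1 else 0)) / 2 else 0

theorem permPoint_partnerPerm (hM : IsMatching G M) : permPoint G hM.partnerPerm = mInd M := by
  classical
  ext i j
  by_cases hij : G.Adj i j
  · have hMji : M j i ↔ M i j := ⟨hM.symm j i, hM.symm i j⟩
    rw [permPoint, if_pos hij, mInd, hM.coe_partnerPerm]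
    simp only [hM.partner_eq_iff_of_ne hij.ne, hM.partner_eq_iff_of_ne hij.ne', hMji]
    split_ifs <;> norm_num
  · rw [permPoint, if_neg hij, mInd, if_neg fun h => hij (hM.subset i j h)]

theorem halfIntegral_permPoint (π : Equiv.Perm V) : HalfIntegral (permPoint G π) := by
  intro i j
  unfold permPoint
  split_ifs <;> norm_num

theorem IsOutcome.dualFeasible (h : IsOutcome G w M γ) (hst : Stable G w M γ) :
    DualFeasible G w γ := by
  refine ⟨h.2.1, fun i j hij => ?_⟩
  by_cases hM : M i j
  · exact (h.2.2.1 i j hM).ge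
  · exact hst i j hij hM

variable [DecidableRel G.Adj]

theorem edgeWeight_symm (hw : ∀ i j, w i j = w j i) (i j : V) :
    edgeWeight G w i j = edgeWeight G w j i := by
  simp only [edgeWeight, G.adj_comm i j, hw i j]

variable [Fintype V]

theorem LPval_eq_sum_edgeWeight : LPval G w x = 1 / 2 * ∑ i, ∑ j, edgeWeight G w i j * x i j := by
  simp only [LPval, SimpleGraph.neighborFinset_eq_filter, sum_filter, edgeWeight, ite_mul, zero_mul]

theorem lpFeasible_permPoint (π : Equiv.Perm V) : LPFeasible G (permPoint G π) := by
  classical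
  have nonneg (i j : V) : 0 ≤ permPoint G π i j := by
    rcases halfIntegral_permPoint (G := G) π i j with h | h | h <;> norm_num [h]
  refine ⟨fun i j => ?_, nonneg, fun i j hij => if_neg hij, fun i => ?_⟩
  · simp only [permPoint, G.adj_comm i j, add_comm]
  calc ∑ j ∈ G.neighborFinset i, permPoint G π i j
      ≤ ∑ j, permPoint G π i j := sum_le_univ_sum_of_nonneg (nonneg i)
    _ ≤ ∑ j, ((if π i = j then 1 else 0) + (if j = π.symm i then 1 else 0)) / 2 := by
        refine sum_le_sum fun j _ => ?_
        simp only [permPoint, π.eq_symm_apply]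
        split_ifs <;> norm_num
    _ = 1 := by simp [← sum_div, sum_add_distrib]

theorem LPval_permPoint (hw : ∀ i j, w i j = w j i) (π : Equiv.Perm V) :
    LPval G w (permPoint G π) = 1 / 2 * ∑ i, edgeWeight G w i (π i) := by
  classical
  have split (i j : V) : edgeWeight G w i j * permPoint G π i j =
      ((if π i = j then edgeWeight G w i j else 0) +
        (if π j = i then edgeWeight G w j i else 0)) / 2 := by
    rw [edgeWeight_symm hw j i]
    unfold edgeWeight permPoint
    split_ifs <;> ring
  have row (i : V) : ∑ j, (if π i = j then edgeWeight G w i j else 0) = edgeWeight G w i (π i) := by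
    simp
  simp only [LPval_eq_sum_edgeWeight, split, ← sum_div, sum_add_distrib, row]
  rw [sum_comm]
  simp only [row, add_self_div_two]

theorem LPval_mInd (hw : ∀ i j, w i j = w j i) (hM : IsMatching G M) :
    LPval G w (mInd M) = 1 / 2 * ∑ i, edgeWeight G w i (partner M i) := by
  rw [← permPoint_partnerPerm hM, LPval_permPoint hw, hM.coe_partnerPerm]

theorem sum_add_mul_eq_two_mul_sum (hx : ∀ i j, x i j = x j i) :
    ∑ i, ∑ j ∈ G.neighborFinset i, (y i + y j) * x i j =
      2 * ∑ i, y i * ∑ j ∈ G.neighborFinset i, x i j := by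
  have hswap : ∑ i, ∑ j ∈ G.neighborFinset i, y j * x i j =
      ∑ i, ∑ j ∈ G.neighborFinset i, y i * x i j := by
    rw [sum_comm' (t' := univ) (s' := fun i => G.neighborFinset i) (by simp [G.adj_comm])]
    simp only [hx]
  simp only [add_mul, sum_add_distrib, hswap, mul_sum, two_mul]

theorem DualFeasible.LPval_le_sum (hy : DualFeasible G w y) (hx : LPFeasible G x) :
    LPval G w x ≤ ∑ i, y i := by
  obtain ⟨hsymm, hnonneg, -, hdeg⟩ := hx
  calc LPval G w x
      ≤ 1 / 2 * ∑ i, ∑ j ∈ G.neighborFinset i, (y i + y j) * x i j := by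
        unfold LPval
        gcongr with i _ j hj
        · exact hnonneg i j
        · exact hy.2 i j ((G.mem_neighborFinset i j).1 hj)
    _ = ∑ i, y i * ∑ j ∈ G.neighborFinset i, x i j := by
        rw [sum_add_mul_eq_two_mul_sum hsymm]; ring
    _ ≤ ∑ i, y i := sum_le_sum fun i _ => mul_le_of_le_one_right (hy.1 i) (hdeg i)

theorem IsOutcome.LPval_mInd (hw : ∀ i j, w i j = w j i) (h : IsOutcome G w M γ) :
    LPval G w (mInd M) = ∑ i, γ i := by
  obtain ⟨hM, -, hmatched, hunmatched⟩ := h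
  have hedge (i : V) : edgeWeight G w i (partner M i) = γ i + γ (partner M i) := by
    by_cases hi : ∃ j, M i j
    · obtain ⟨j, hij⟩ := hi
      rw [hM.partner_eq hij, edgeWeight, if_pos (hM.subset i j hij), hmatched i j hij]
    · have hi := not_exists.1 hi
      simp [partner_eq_self hi, edgeWeight, hunmatched i hi]
  have hsum : ∑ i, γ (partner M i) = ∑ i, γ i := Equiv.sum_comp hM.partnerPerm γ
  rw [EN.LPval_mInd hw hM, sum_congr rfl fun i _ => hedge i, sum_add_distrib, hsum]
  ring

theorem IsOutcome.lpOptimal_mInd (hw : ∀ i j, w i j = w j i) (h : IsOutcome G w M γ)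
    (hst : Stable G w M γ) : LPOptimal G w (mInd M) :=
  ⟨permPoint_partnerPerm h.1 ▸ lpFeasible_permPoint _, fun _ hx =>
    ((h.dualFeasible hst).LPval_le_sum hx).trans_eq (h.LPval_mInd hw).symm⟩

end MatchingLP

section SlackDual

variable {V : Type*} {G : SimpleGraph V} {M : V → V → Prop} {w : V → V → ℝ} {y : V → ℝ} {c g : ℝ}
  {i j : V}

/-- A dual solution `y` that certifies the optimality of the matching `M` with margin `c`: it is
tight on `M`, and every other constraint that complementary slackness allows to be strict has slack
at least `c`. -/
structure IsSlackDual (G : SimpleGraph V) (w : V → V → ℝ) (M : V → V → Prop) (c : ℝ)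
    (y : V → ℝ) : Prop where
  add_eq : ∀ i j, M i j → y i + y j = w i j
  add_le_add : ∀ i j, G.Adj i j → ¬M i j → w i j + c ≤ y i + y j
  eq_zero : ∀ i, (∀ j, ¬M i j) → y i = 0
  le_of_matched : ∀ i j, M i j → c ≤ y i

theorem IsSlackDual.exists_matched_endpoint (hy : IsSlackDual G w M c y) (hc : 0 ≤ c)
    (hw : ∀ i j, G.Adj i j → 0 < w i j) (hij : G.Adj i j) : (∃ k, M i k) ∨ ∃ k, M j k := by
  by_contra! h
  linarith [hy.add_le_add i j hij (h.1 j), hy.eq_zero i h.1, hy.eq_zero j h.2, hw i j hij]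

open Classical in
/-- Edge weights perturbed by a reward `2c` for the pairs, loops included, that are avoided by the
matching `M`, seen as a permutation. -/
noncomputable def slackWeight (G : SimpleGraph V) [DecidableRel G.Adj] (w : V → V → ℝ)
    (M : V → V → Prop) (c : ℝ) (i j : V) : ℝ :=
  edgeWeight G w i j + if j ≠ partner M i ∧ (G.Adj i j ∨ i = j) then 2 * c else 0

variable [DecidableRel G.Adj]

theorem slackWeight_partner (i : V) :
    slackWeight G w M c i (partner M i) = edgeWeight G w i (partner M i) := by
  simp [slackWeight]

theorem slackWeight_le (hc : 0 ≤ c) (i j : V) :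
    slackWeight G w M c i j ≤ edgeWeight G w i j + 2 * c := by
  unfold slackWeight
  split_ifs <;> linarith

theorem slackWeight_of_adj (hM : IsMatching G M) (hij : G.Adj i j) (hMij : ¬M i j) :
    slackWeight G w M c i j = w i j + 2 * c := by
  have hj : j ≠ partner M i := fun h => hMij ((hM.partner_eq_iff_of_ne hij.ne).1 h.symm)
  simp [slackWeight, edgeWeight, hij, hj]

theorem slackWeight_self (hM : IsMatching G M) (hij : M i j) : slackWeight G w M c i i = 2 * c := by
  simp [slackWeight, edgeWeight, hM.partner_eq hij, (hM.subset i j hij).ne]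

theorem slackWeight_apply_of_permPoint_eq (hM : IsMatching G M) {π : Equiv.Perm V}
    (hπ : permPoint G π = mInd M) (i : V) :
    slackWeight G w M c i (π i) = slackWeight G w M c i (partner M i) := by
  by_cases hi : ∃ j, M i j
  · obtain ⟨j, hij⟩ := hi
    have hone : permPoint G π i j = 1 := by rw [hπ, mInd, if_pos hij]
    have hπi : π i = j := by
      by_contra hne
      simp only [permPoint, if_pos (hM.subset i j hij), if_neg hne] at hone
      split_ifs at hone <;> norm_num at hone
    rw [hπi, hM.partner_eq hij]
  have hself := partner_eq_self (not_exists.1 hi)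
  have hnadj : ¬G.Adj i (π i) := by
    intro hadj
    have hzero : permPoint G π i (π i) = 0 := by rw [hπ, mInd, if_neg (not_exists.1 hi _)]
    simp only [permPoint, if_pos hadj] at hzero
    split_ifs at hzero <;> norm_num at hzero
  rw [hself]
  simp [slackWeight, edgeWeight, hself, hnadj, eq_comm]

variable [Fintype V]

theorem sum_slackWeight_le (hw : ∀ i j, w i j = w j i) (hM : IsMatching G M)
    (hgap : ∀ x, LPFeasible G x → HalfIntegral x → x ≠ mInd M →
      LPval G w x + g ≤ LPval G w (mInd M))
    (hc : 0 ≤ c) (hcg : Fintype.card V * c ≤ g) (π : Equiv.Perm V) :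
    ∑ i, slackWeight G w M c i (π i) ≤ ∑ i, slackWeight G w M c i (partner M i) := by
  rcases eq_or_ne (permPoint G π) (mInd M) with hπ | hπ
  · exact (sum_congr rfl fun i _ => slackWeight_apply_of_permPoint_eq hM hπ i).le
  have hlp := hgap _ (lpFeasible_permPoint π) (halfIntegral_permPoint π) hπ
  rw [LPval_permPoint hw, LPval_mInd hw hM] at hlp
  calc ∑ i, slackWeight G w M c i (π i)
      ≤ ∑ i, (edgeWeight G w i (π i) + 2 * c) := sum_le_sum fun i _ => slackWeight_le hc i (π i)
    _ = ∑ i, edgeWeight G w i (π i) + 2 * (Fintype.card V * c) := by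
        rw [sum_add_distrib, sum_const, nsmul_eq_mul, card_univ]; ring
    _ ≤ ∑ i, edgeWeight G w i (partner M i) := by linarith
    _ = ∑ i, slackWeight G w M c i (partner M i) := by simp only [slackWeight_partner]

theorem exists_isSlackDual (hw : ∀ i j, w i j = w j i) (hM : IsMatching G M)
    (hgap : ∀ x, LPFeasible G x → HalfIntegral x → x ≠ mInd M →
      LPval G w x + g ≤ LPval G w (mInd M))
    (hc : 0 ≤ c) (hcg : Fintype.card V * c ≤ g) : ∃ y, IsSlackDual G w M c y := by
  obtain ⟨u, v, hle, heq⟩ := exists_assignment_dual (slackWeight G w M c) hM.partnerPerm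
    (sum_slackWeight_le hw hM hgap hc hcg)
  simp only [hM.coe_partnerPerm, slackWeight_partner] at heq
  have heq_edge {i j : V} (hij : M i j) : w i j = u i + v j := by
    simpa [hM.partner_eq hij, edgeWeight, hM.subset i j hij] using heq i
  refine ⟨fun i => (u i + v i) / 2, fun i j hij => ?_, fun i j hij hMij => ?_, fun i hi => ?_,
    fun i j hij => ?_⟩
  · linarith [heq_edge hij, heq_edge (hM.symm i j hij), hw i j]
  · have hij' := slackWeight_of_adj (w := w) (c := c) hM hij hMij
    have hji' := slackWeight_of_adj (w := w) (c := c) hM hij.symm fun h => hMij (hM.symm j i h)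
    linarith [hle i j, hle j i, hw i j]
  · have hself := heq i
    rw [partner_eq_self hi, edgeWeight, if_neg (G.irrefl)] at hself
    rw [← hself, zero_div]
  · linarith [hle i i, slackWeight_self (w := w) (c := c) hM hij]

end SlackDual

theorem exists_margin {n : ℕ} {g ε : ℝ} (hg : 0 ≤ g) (hε : ε < g / (6 * (n : ℝ) ^ 2)) :
    ∃ c, 0 ≤ c ∧ n * c ≤ g ∧ 6 * n * ε < c := by
  rcases n.eq_zero_or_pos with rfl | hn
  · exact ⟨1, by simpa using hg⟩
  have hn : (0 : ℝ) < n := Nat.cast_pos.2 hn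
  refine ⟨g / n, by positivity, (mul_div_cancel₀ g hn.ne').le, ?_⟩
  rw [lt_div_iff₀ (by positivity)] at hε ⊢
  linarith

section Offers

variable {V : Type*} {w α : V → V → ℝ} {i j : V}

theorem offer_of_add_le (hji : 0 ≤ α j i) (h : α i j + α j i ≤ w i j) :
    offer w α i j = (w i j - α i j + α j i) / 2 := by
  rw [offer, pos, pos, max_eq_left (by linarith), max_eq_left (by linarith)]
  ring

theorem offer_of_le_add (h : w i j ≤ α i j + α j i) : offer w α i j = pos (w i j - α i j) := by
  rw [offer, pos, pos, max_eq_right (a := w i j - α i j - α j i) (by linarith)]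
  ring

theorem offer_nonneg (hji : 0 ≤ α j i) : 0 ≤ offer w α i j := by
  rcases le_total (α i j + α j i) (w i j) with h | h
  · rw [offer_of_add_le hji h]
    linarith
  · rw [offer_of_le_add h]
    exact le_max_right _ _

theorem add_offer_le_of_offer_pos (hji : 0 ≤ α j i) (hpos : 0 < offer w α i j) :
    α i j + offer w α i j ≤ w i j := by
  rcases le_total (α i j + α j i) (w i j) with h | h
  · rw [offer_of_add_le hji h]
    linarith
  · rw [offer_of_le_add h, pos] at hpos ⊢
    have hlt : 0 < w i j - α i j := (lt_max_iff.1 hpos).resolve_right (lt_irrefl 0)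
    rw [max_eq_left hlt.le, add_sub_cancel]

theorem offer_le_of_le_add (hij : 0 ≤ α i j) (h : w j i ≤ α j i + α i j) :
    offer w α j i ≤ α i j := by
  rw [offer_of_le_add h]
  exact max_le (by linarith) hij

theorem offer_add_offer_of_add_le (hw : w j i = w i j) (hij : 0 ≤ α i j) (hji : 0 ≤ α j i)
    (h : α i j + α j i ≤ w i j) : offer w α i j + offer w α j i = w i j := by
  rw [offer_of_add_le hji h, offer_of_add_le hij (by linarith)]
  linarith

theorem offer_add_offer_le_of_offer_pos (hw : w j i = w i j) (hij : 0 ≤ α i j) (hji : 0 ≤ α j i)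
    (hpos : 0 < offer w α i j) : offer w α i j + offer w α j i ≤ w i j := by
  rcases le_total (α i j + α j i) (w i j) with h | h
  · exact (offer_add_offer_of_add_le hw hij hji h).le
  · linarith [add_offer_le_of_offer_pos hji hpos, offer_le_of_le_add (w := w) hij (by linarith)]

theorem le_offer_add_max (hw : w j i = w i j) (hij : 0 ≤ α i j) (hji : 0 ≤ α j i) :
    w i j ≤ offer w α i j + max (offer w α j i) (α i j) := by
  rcases le_total (α i j + α j i) (w i j) with h | h
  · rw [← offer_add_offer_of_add_le hw hij hji h]
    gcongr
    exact le_max_left _ _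
  · rw [offer_of_le_add h, pos]
    linarith [le_max_left (w i j - α i j) 0, le_max_right (offer w α j i) (α i j)]

theorem offer_sub_le_max (hw : w j i = w i j) (hij : 0 ≤ α i j) (hji : 0 ≤ α j i) :
    offer w α i j - α j i ≤ max (offer w α j i - α i j) 0 := by
  rcases le_total (α i j + α j i) (w i j) with h | h
  · rw [offer_of_add_le hji h, offer_of_add_le hij (by linarith)]
    exact le_max_of_le_left (by linarith)
  · exact le_max_of_le_right (by linarith [offer_le_of_le_add (w := w) hji h])

end Offers

section Earnings

variable {V : Type*} [Fintype V] {G : SimpleGraph V} [DecidableRel G.Adj] {w α : V → V → ℝ}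
  {i j k : V}

theorem offer_le_earn (hik : G.Adj i k) : offer w α k i ≤ earn G w α i :=
  le_fmax (f := fun k => offer w α k i) ((G.mem_neighborFinset i k).2 hik)

theorem exists_offer_eq_earn (hi : 0 < earn G w α i) :
    ∃ k, G.Adj i k ∧ offer w α k i = earn G w α i := by
  obtain ⟨k, hk, heq⟩ := exists_eq_fmax_of_pos hi
  exact ⟨k, (G.mem_neighborFinset i k).1 hk, heq⟩

theorem earn_nonneg (hα : ValidMsg G α) (i : V) : 0 ≤ earn G w α i :=
  fmax_nonneg fun k hk => offer_nonneg (hα i k ((G.mem_neighborFinset i k).1 hk))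

variable [DecidableEq V]

theorem offer_le_upd (hik : G.Adj i k) (hkj : k ≠ j) : offer w α k i ≤ upd G w α i j :=
  le_fmax (f := fun k => offer w α k i) (mem_erase.2 ⟨hkj, (G.mem_neighborFinset i k).2 hik⟩)

theorem exists_offer_eq_upd (hij : 0 < upd G w α i j) :
    ∃ k, k ≠ j ∧ G.Adj i k ∧ offer w α k i = upd G w α i j := by
  obtain ⟨k, hk, heq⟩ := exists_eq_fmax_of_pos hij
  obtain ⟨hkj, hik⟩ := mem_erase.1 hk
  exact ⟨k, hkj, (G.mem_neighborFinset i k).1 hik, heq⟩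

theorem upd_nonneg (hα : ValidMsg G α) (i j : V) : 0 ≤ upd G w α i j :=
  fmax_nonneg fun k hk => offer_nonneg (hα i k ((G.mem_neighborFinset i k).1 (mem_of_mem_erase hk)))

theorem upd_le_earn (hα : ValidMsg G α) (i j : V) : upd G w α i j ≤ earn G w α i :=
  fmax_le (earn_nonneg hα i) fun k hk =>
    offer_le_earn ((G.mem_neighborFinset i k).1 (mem_of_mem_erase hk))

theorem earn_le_max (hα : ValidMsg G α) (i j : V) :
    earn G w α i ≤ max (offer w α j i) (upd G w α i j) := by
  refine fmax_le (le_max_of_le_right (upd_nonneg hα i j)) fun k hk => ?_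
  rcases eq_or_ne k j with rfl | hkj
  · exact le_max_left _ _
  · exact le_max_of_le_right (offer_le_upd ((G.mem_neighborFinset i k).1 hk) hkj)

theorem earn_eq_offer_of_upd_lt (hα : ValidMsg G α) (hij : G.Adj i j)
    (h : upd G w α i j < earn G w α i) : earn G w α i = offer w α j i :=
  ((le_max_iff.1 (earn_le_max hα i j)).resolve_right h.not_ge).antisymm (offer_le_earn hij)

end Earnings

section EpsFixedPt

variable {V : Type*} [Fintype V] [DecidableEq V] {G : SimpleGraph V} [DecidableRel G.Adj]
  {w α : V → V → ℝ} {ε δ : ℝ} {i j k : V}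

namespace IsEpsFixedPt

variable (hfix : IsEpsFixedPt G w α ε)
include hfix

theorem nonneg (hij : G.Adj i j) : 0 ≤ ε :=
  (abs_nonneg _).trans (hfix i j hij)

theorem le_upd_add (hij : G.Adj i j) : α i j ≤ upd G w α i j + ε := by
  linarith [(abs_le.1 (hfix i j hij)).2]

theorem upd_le_add (hij : G.Adj i j) : upd G w α i j ≤ α i j + ε := by
  linarith [(abs_le.1 (hfix i j hij)).1]

variable (hw : ∀ i j, w i j = w j i) (hα : ValidMsg G α)
include hw hα

theorem earn_add_offer_le (hij : G.Adj i j) (hpos : 0 < offer w α i j) :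
    earn G w α i + offer w α i j ≤ w i j + ε := by
  have hji := hα j i hij.symm
  rcases le_max_iff.1 (earn_le_max (w := w) hα i j) with h | h
  · linarith [hfix.nonneg hij,
      offer_add_offer_le_of_offer_pos (hw j i) (hα i j hij) hji hpos]
  · linarith [hfix.upd_le_add hij, add_offer_le_of_offer_pos hji hpos]

theorem le_earn_add_offer (hij : G.Adj i j) : w i j ≤ earn G w α i + offer w α i j + ε := by
  have hmax : max (offer w α j i) (α i j) ≤ earn G w α i + ε :=
    max_le (by linarith [hfix.nonneg hij, offer_le_earn (w := w) (α := α) hij])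
      (by linarith [hfix.le_upd_add hij, upd_le_earn (w := w) hα i j])
  linarith [le_offer_add_max (hw j i) (hα i j hij) (hα j i hij.symm)]

theorem le_earn_add_earn (hij : G.Adj i j) : w i j ≤ earn G w α i + earn G w α j + ε := by
  linarith [hfix.le_earn_add_offer hw hα hij, offer_le_earn (w := w) (α := α) hij.symm]

theorem earn_sub_le_offer_swap (hij : G.Adj i j) (hpos : 0 < offer w α i j)
    (h : earn G w α j - δ ≤ offer w α i j) : earn G w α i - (δ + 2 * ε) ≤ offer w α j i := by
  linarith [hfix.earn_add_offer_le hw hα hij hpos, hfix.le_earn_add_offer hw hα hij.symm, hw i j]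

theorem earn_sub_le_upd_swap (hij : G.Adj i j) (hδ : 0 ≤ δ)
    (h : earn G w α i - δ ≤ upd G w α i j) : earn G w α j - (δ + 2 * ε) ≤ upd G w α j i := by
  have hε := hfix.nonneg hij
  have hoffer : offer w α i j - α j i ≤ δ + ε :=
    (offer_sub_le_max (hw j i) (hα i j hij) (hα j i hij.symm)).trans <| max_le
      (by linarith [offer_le_earn (w := w) (α := α) hij, hfix.upd_le_add hij]) (by linarith)
  rcases le_max_iff.1 (earn_le_max (w := w) hα j i) with h' | h' <;>
    linarith [hfix.le_upd_add hij.symm]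

end IsEpsFixedPt

/-- The node `v` is matched in `M`, but comes within `δ` of its earnings even without the offer of
its partner. -/
def IsContested (G : SimpleGraph V) [DecidableRel G.Adj] (w α : V → V → ℝ) (M : V → V → Prop)
    (δ : ℝ) (v : V) : Prop :=
  ∃ p, M v p ∧ earn G w α v - δ ≤ upd G w α v p

variable {M : V → V → Prop} {y : V → ℝ} {c : ℝ}

theorem isContested_of_earn_sub_le_offer (hij : M i j) (hik : G.Adj i k) (hMik : ¬M i k)
    (h : earn G w α i - δ ≤ offer w α k i) : IsContested G w α M δ i :=
  ⟨j, hij, h.trans (offer_le_upd hik fun hkj => hMik (hkj ▸ hij))⟩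

namespace IsEpsFixedPt

variable (hfix : IsEpsFixedPt G w α ε) (hw : ∀ i j, w i j = w j i) (hα : ValidMsg G α)
  (hM : IsMatching G M)
include hfix hw hα hM

theorem isContested_partner (hij : M i j) (hδ : 0 ≤ δ) (h : earn G w α i - δ ≤ upd G w α i j) :
    IsContested G w α M (δ + 2 * ε) j :=
  ⟨i, hM.symm i j hij, hfix.earn_sub_le_upd_swap hw hα (hM.subset i j hij) hδ h⟩

variable (hy : IsSlackDual G w M c y)
include hy

theorem neg_le_excess_add_excess (hij : M i j) :
    -ε ≤ (earn G w α i - y i) + (earn G w α j - y j) := by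
  linarith [hfix.le_earn_add_earn hw hα (hM.subset i j hij), hy.add_eq i j hij]

theorem exists_isContested_neg_le_excess (hi : IsContested G w α M (2 * ε) i) :
    ∃ v, -(ε / 2) ≤ earn G w α v - y v ∧ IsContested G w α M (4 * ε) v := by
  obtain ⟨j, hij, hnear⟩ := hi
  have hε := hfix.nonneg (hM.subset i j hij)
  have hsum := hfix.neg_le_excess_add_excess hw hα hM hy hij
  rcases le_total (earn G w α i - y i) (earn G w α j - y j) with hle | hle
  · refine ⟨j, by linarith, ?_⟩
    convert hfix.isContested_partner hw hα hM hij (by linarith) hnear using 1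
    ring
  · exact ⟨i, by linarith, j, hij, by linarith⟩

/-- The competing offer to `v` comes from some `l`, so `l` earns far less than `y l`; then the
partner of `l` earns far more than its own share, and the near-tie travels from `v` to `l` to it. -/
theorem exists_isContested_excess_lt (hδ : 0 ≤ δ) (hδc : δ + 2 * ε < c)
    (hi : IsContested G w α M δ i) (hexc : -(ε / 2) ≤ earn G w α i - y i) :
    ∃ k, earn G w α i - y i < earn G w α k - y k ∧ IsContested G w α M (δ + 4 * ε) k := by
  obtain ⟨j, hij, hnear⟩ := hi
  have hε := hfix.nonneg (hM.subset i j hij)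
  have hupd : 0 < upd G w α i j := by linarith [hy.le_of_matched i j hij]
  obtain ⟨l, hlj, hil, hoffer⟩ := exists_offer_eq_upd hupd
  have hMil : ¬M i l := fun h => hlj (hM.unique i l j h hij)
  have hloss : (earn G w α i - y i) + (earn G w α l - y l) ≤ δ + ε - c := by
    linarith [hfix.earn_add_offer_le hw hα hil.symm (hoffer ▸ hupd), hy.add_le_add i l hil hMil,
      hw i l]
  have hl : ∃ k, M l k := by
    by_contra! hl
    linarith [hy.eq_zero l hl, earn_nonneg (w := w) hα l]
  obtain ⟨k, hlk⟩ := hl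
  have hMli : ¬M l i := fun h => hMil (hM.symm l i h)
  have hback : earn G w α l - (δ + 2 * ε) ≤ offer w α i l :=
    hfix.earn_sub_le_offer_swap hw hα hil.symm (hoffer ▸ hupd) (hoffer ▸ hnear)
  have hupd_l : earn G w α l - (δ + 2 * ε) ≤ upd G w α l k :=
    hback.trans (offer_le_upd hil.symm fun hik => hMli (hik ▸ hlk))
  refine ⟨k, by linarith [hfix.neg_le_excess_add_excess hw hα hM hy hlk], ?_⟩
  convert hfix.isContested_partner hw hα hM hlk (by linarith) hupd_l using 1
  ring

theorem not_isContested (hc : 6 * Fintype.card V * ε < c) (i : V) :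
    ¬IsContested G w α M (2 * ε) i := by
  intro hi
  have hε : 0 ≤ ε := by
    obtain ⟨j, hij, -⟩ := hi
    exact hfix.nonneg (hM.subset i j hij)
  obtain ⟨t, ht, v, ⟨hexc, hv⟩, hmax⟩ := exists_lt_card_forall_not_lt (fun v => earn G w α v - y v)
    (P := fun t v => -(ε / 2) ≤ earn G w α v - y v ∧ IsContested G w α M (4 * (t + 1) * ε) v)
    (by simpa using hfix.exists_isContested_neg_le_excess hw hα hM hy hi)
  have htcard : (t : ℝ) + 1 ≤ Fintype.card V := by exact_mod_cast ht
  have hslack : 4 * (t + 1) * ε + 2 * ε < c := by nlinarith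
  obtain ⟨k, hlt, hk⟩ :=
    hfix.exists_isContested_excess_lt hw hα hM hy (by positivity) hslack hv hexc
  refine hmax k ⟨hexc.trans hlt.le, ?_⟩ hlt
  convert hk using 1
  push_cast
  ring

end IsEpsFixedPt

end EpsFixedPt

section Bargaining

variable {V : Type*} [Fintype V] [DecidableEq V] {G : SimpleGraph V} [DecidableRel G.Adj]
  {w α : V → V → ℝ} {M : V → V → Prop} {γ : V → ℝ} {ε δ : ℝ} {i j k : V}

theorem IsEpsNB.mono (hεδ : ε ≤ δ) (h : IsEpsNB G w M γ ε) : IsEpsNB G w M γ δ :=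
  ⟨h.1, h.2.1, fun i j hij => (h.2.2 i j hij).trans hεδ⟩

theorem IsEpsFixedPt.abs_bestAlt_sub_upd_le (hfix : IsEpsFixedPt G w α ε)
    (hw : ∀ i j, w i j = w j i) (hα : ValidMsg G α) (hε : 0 ≤ ε) (i j : V) :
    |bestAlt G w (earn G w α) i j - upd G w α i j| ≤ ε := by
  have hbest_nonneg : 0 ≤ bestAlt G w (earn G w α) i j := fmax_nonneg fun k _ => le_max_right _ _
  rw [abs_sub_le_iff, sub_le_iff_le_add', sub_le_iff_le_add']
  constructor <;> refine fmax_le (by linarith [upd_nonneg (w := w) hα i j]) fun k hk => ?_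
  · obtain ⟨hkj, hik⟩ := mem_erase.1 hk
    have hik := (G.mem_neighborFinset i k).1 hik
    have hoffer : offer w α k i ≤ upd G w α i j := offer_le_upd hik hkj
    refine max_le ?_ (by linarith [upd_nonneg (w := w) hα i j])
    linarith [hfix.le_earn_add_offer hw hα hik.symm, hw i k]
  · have hki := ((G.mem_neighborFinset i k).1 (mem_of_mem_erase hk)).symm
    have hle : w i k - earn G w α k ≤ bestAlt G w (earn G w α) i j :=
      (le_max_left _ 0).trans (le_fmax (f := fun k => pos (w i k - earn G w α k)) hk)
    rcases le_or_gt (offer w α k i) 0 with h | h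
    · linarith
    · linarith [hfix.earn_add_offer_le hw hα hki h, hw i k]

variable (hunc : ∀ v, ¬IsContested G w α M (2 * ε) v)
include hunc

theorem upd_lt_of_not_isContested (hij : M i j) : upd G w α i j < earn G w α i - 2 * ε :=
  not_le.1 fun h => hunc i ⟨j, hij, h⟩

variable (hfix : IsEpsFixedPt G w α ε) (hα : ValidMsg G α) (hM : IsMatching G M)
include hfix hα hM

namespace IsEpsFixedPt

theorem earn_eq_offer_of_matched (hij : M i j) : earn G w α i = offer w α j i := by
  have hadj := hM.subset i j hij
  exact earn_eq_offer_of_upd_lt hα hadj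
    (by linarith [upd_lt_of_not_isContested hunc hij, hfix.nonneg hadj])

theorem earn_pos_of_matched (hij : M i j) : 0 < earn G w α i := by
  linarith [upd_lt_of_not_isContested hunc hij, hfix.nonneg (hM.subset i j hij),
    upd_nonneg (w := w) hα i j]

theorem offer_lt_offer_of_matched (hij : M i j) (hik : G.Adj i k) (hkj : k ≠ j) :
    offer w α k i < offer w α j i := by
  linarith [offer_le_upd (w := w) (α := α) hik hkj, upd_lt_of_not_isContested hunc hij,
    hfix.earn_eq_offer_of_matched hunc hα hM hij, hfix.nonneg hik]

theorem earn_eq_half_of_matched (hij : M i j) :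
    earn G w α i = (w j i - α j i + α i j) / 2 := by
  have hadj := hM.subset i j hij
  have hoffer := hfix.earn_eq_offer_of_matched hunc hα hM hij
  rw [hoffer]
  refine offer_of_add_le (hα i j hadj) (le_of_not_gt fun hlt => ?_)
  linarith [offer_le_of_le_add (hα i j hadj) hlt.le, hfix.le_upd_add hadj,
    upd_lt_of_not_isContested hunc hij, hfix.nonneg hadj]

variable (hw : ∀ i j, w i j = w j i) (hcover : ∀ i j, G.Adj i j → (∃ k, M i k) ∨ ∃ k, M j k)
include hw hcover

theorem earn_eq_zero_of_unmatched (hi : ∀ j, ¬M i j) : earn G w α i = 0 := by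
  refine ((earn_nonneg hα i).eq_or_lt.resolve_right fun hpos => ?_).symm
  obtain ⟨k, hik, hoffer⟩ := exists_offer_eq_earn hpos
  obtain ⟨l, hkl⟩ := (hcover i k hik).resolve_left (not_exists.2 hi)
  have hback := hfix.earn_sub_le_offer_swap hw hα (δ := 0) hik.symm (hoffer ▸ hpos)
    (by rw [hoffer, sub_zero])
  rw [zero_add] at hback
  exact hunc k
    (isContested_of_earn_sub_le_offer hkl hik.symm (fun h => hi k (hM.symm k i h)) hback)

theorem stable_earn : Stable G w M (earn G w α) := by
  intro i j hij hMij
  by_contra! hlt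
  have hoffer_ji : earn G w α i - 2 * ε ≤ offer w α j i := by
    linarith [hfix.le_earn_add_offer hw hα hij.symm, hw i j, hfix.nonneg hij]
  have hoffer_ij : earn G w α j - 2 * ε ≤ offer w α i j := by
    linarith [hfix.le_earn_add_offer hw hα hij, hfix.nonneg hij]
  rcases hcover i j hij with ⟨k, hik⟩ | ⟨k, hjk⟩
  · exact hunc i (isContested_of_earn_sub_le_offer hik hij hMij hoffer_ji)
  · exact hunc j (isContested_of_earn_sub_le_offer hjk hij.symm (fun h => hMij (hM.symm j i h))
      hoffer_ij)

theorem isOutcome_earn : IsOutcome G w M (earn G w α) := by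
  refine ⟨hM, earn_nonneg hα, fun i j hij => ?_, fun i hi =>
    hfix.earn_eq_zero_of_unmatched hunc hα hM hw hcover hi⟩
  rw [hfix.earn_eq_half_of_matched hunc hα hM hij,
    hfix.earn_eq_half_of_matched hunc hα hM (hM.symm i j hij), hw j i]
  ring

theorem isEpsNB_earn : IsEpsNB G w M (earn G w α) (4 * ε) := by
  refine ⟨hfix.isOutcome_earn hunc hα hM hw hcover, hfix.stable_earn hunc hα hM hw hcover,
    fun i j hij => ?_⟩
  have hadj := hM.subset i j hij
  have hdiff : earn G w α i - earn G w α j = α i j - α j i := by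
    rw [hfix.earn_eq_half_of_matched hunc hα hM hij,
      hfix.earn_eq_half_of_matched hunc hα hM (hM.symm i j hij), hw j i]
    ring
  have hbest := hfix.abs_bestAlt_sub_upd_le hw hα (hfix.nonneg hadj)
  rw [abs_le]
  constructor <;> linarith [abs_le.1 (hbest i j), abs_le.1 (hbest j i), abs_le.1 (hfix i j hadj),
    abs_le.1 (hfix j i hadj.symm)]

theorem induces_offer : Induces G (offer w α) M := by
  refine ⟨hM, fun i ⟨k, hik, hpos⟩ => ?_, fun i hi j hij =>
    (hfix.earn_pos_of_matched hunc hα hM hij).ne' hi⟩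
  obtain ⟨j, hij⟩ : ∃ j, M i j := by
    by_contra! hi
    exact (hpos.trans_le (offer_le_earn hik)).ne'
      (hfix.earn_eq_zero_of_unmatched hunc hα hM hw hcover hi)
  exact ⟨j, hij, fun k hik hkj => hfix.offer_lt_offer_of_matched hunc hα hM hij hik hkj⟩

end IsEpsFixedPt

end Bargaining

/-- If the LP has a unique optimum, integral, corresponding to
`M*` with gap `g > 0`, then any `ε`-fixed point with `ε < g/(6n²)` induces `M*` and
its earnings form a `6ε`-Nash bargaining solution with `M*`; conversely, every
`ε'`-Nash bargaining solution uses the matching `M*`. -/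
theorem eps_fixedPoint_induces_and_epsNB
    {V : Type*} [Fintype V] [DecidableEq V] (G : SimpleGraph V) [DecidableRel G.Adj]
    (w : V → V → ℝ) (hw : GoodW G w)
    (Mstar : V → V → Prop) (hM : IsMatching G Mstar)
    (hopt : LPOptimal G w (mInd Mstar))
    (huniq : ∀ x, LPOptimal G w x → x = mInd Mstar)
    (g : ℝ) (hg : 0 < g)
    (hgap : ∀ x : V → V → ℝ, LPFeasible G x → HalfIntegral x → x ≠ mInd Mstar →
      LPval G w x + g ≤ LPval G w (mInd Mstar))
    (ε : ℝ) (hε0 : 0 < ε) (hε : ε < g / (6 * (Fintype.card V : ℝ) ^ 2))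
    (α : V → V → ℝ) (hval : ValidMsg G α) (hefp : IsEpsFixedPt G w α ε) :
    Induces G (offer w α) Mstar ∧ IsEpsNB G w Mstar (earn G w α) (6 * ε) ∧
      ∀ ε' : ℝ, 0 < ε' → ∀ (M : V → V → Prop) (γNB : V → ℝ),
        IsEpsNB G w M γNB ε' → M = Mstar := by
  obtain ⟨c, hc, hcg, hcε⟩ := exists_margin hg.le hε
  obtain ⟨y, hy⟩ := exists_isSlackDual hw.1 hM hgap hc hcg
  have hunc := hefp.not_isContested hw.1 hval hM hy hcε
  have hcover (i j : V) (hij : G.Adj i j) : (∃ k, Mstar i k) ∨ ∃ k, Mstar j k :=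
    hy.exists_matched_endpoint hc hw.2 hij
  refine ⟨hefp.induces_offer hunc hval hM hw.1 hcover,
    (hefp.isEpsNB_earn hunc hval hM hw.1 hcover).mono (by linarith), ?_⟩
  rintro ε' - M γNB ⟨hout, hstable, -⟩
  exact mInd_injective (huniq _ (hout.lpOptimal_mInd hw.1 hstable))

end EN
end

section
/- (Isolation Lemma.) Let G=(V,E) be a bipartite graph with baseline weights (w_e)_{e∈E}, and choose η > 0 and ξ > 0. Generate random weights by choosing, independently for each e∈E, w̄_e uniformly in [w_e, w_e+η]. Let 𝓜 be the set of matchings of G, let M* be a matching maximizing the random weight w̄(M) := Σ_{e∈M} w̄_e, and let M** be a matching of maximum weight in 𝓜 ∖ {M*}. Then the probability that w̄(M*) − w̄(M**) ≥ ηξ/(2|E|) is at least 1 − ξ. -/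
namespace EN

open Finset

variable {V : Type*}

variable [Fintype V] [DecidableEq V]

/-- A matching, represented as a finite set of unordered edges of `G`. -/
def IsMatchingF {V : Type*} [Fintype V] [DecidableEq V] (G : SimpleGraph V)
    [DecidableRel G.Adj] (M : Finset (Sym2 V)) : Prop :=
  M ⊆ G.edgeFinset ∧ ∀ e ∈ M, ∀ f ∈ M, e ≠ f → ∀ v : V, v ∈ e → v ∉ f

/-- The (random) weight of an unordered edge, read off from the sample point `ω`. -/
noncomputable def wbar {V : Type*} [Fintype V] [DecidableEq V] (G : SimpleGraph V)
    [DecidableRel G.Adj] (ω : {e : Sym2 V // e ∈ G.edgeFinset} → ℝ) (e : Sym2 V) : ℝ :=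
  if h : e ∈ G.edgeFinset then ω ⟨e, h⟩ else 0

/-- The (random) weight of a matching. -/
noncomputable def mWeight {V : Type*} [Fintype V] [DecidableEq V] (G : SimpleGraph V)
    [DecidableRel G.Adj] (ω : {e : Sym2 V // e ∈ G.edgeFinset} → ℝ)
    (M : Finset (Sym2 V)) : ℝ :=
  ∑ e ∈ M, wbar G ω e

/-!
The argument works for an arbitrary family `𝓕` of subsets of a finite set `ι` of weighted points.
Fix `i : ι`. The heaviest member of `𝓕` containing `i` weighs `ω i + A`, the heaviest one avoiding
`i` weighs `B`, and neither `A` nor `B` depends on `ω i`. If some other member comes within `δ` of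
a maximizer, choose `i` in the symmetric difference of the two: both `ω i + A` and `B` are then
within `δ` of the maximum, so `ω i` lies within `δ` of the threshold `B - A`. As `ω i` is uniform
on an interval of length `η` and independent of the threshold, this has probability at most
`2 * δ / η`, and a union bound over `i` concludes.
-/

section ProductMeasure

open MeasureTheory

variable {ι : Type*} [Fintype ι] [DecidableEq ι]

theorem pi_le_of_forall_update_preimage_le {X : ι → Type*} [∀ i, MeasurableSpace (X i)]
    (μ : ∀ i, Measure (X i)) [∀ i, IsProbabilityMeasure (μ i)] {A : Set (∀ i, X i)}
    (hA : MeasurableSet A) (i : ι) {c : ENNReal}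
    (hc : ∀ x, μ i (Function.update x i ⁻¹' A) ≤ c) : Measure.pi μ A ≤ c := by
  have h_slice : (∫⋯∫⁻_{i}, A.indicator 1 ∂μ) ≤ ∫⋯∫⁻_{i}, (fun _ ↦ c) ∂μ := by
    intro x
    have hAx : MeasurableSet (Function.update x i ⁻¹' A) := measurable_update x hA
    simpa only [lmarginal_singleton, lintegral_const, measure_univ, mul_one,
      ← Set.indicator_comp_right, Pi.one_comp, lintegral_indicator_one hAx] using hc x
  calc Measure.pi μ A = ∫⁻ x, A.indicator 1 x ∂Measure.pi μ := (lintegral_indicator_one hA).symm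
    _ ≤ ∫⁻ _, c ∂Measure.pi μ :=
      lintegral_le_of_lmarginal_le {i} (measurable_one.indicator hA) measurable_const h_slice
    _ = c := by simp only [lintegral_const, measure_univ, mul_one]

theorem pi_setOf_mem_ball_le (μ : ι → Measure ℝ) [∀ i, IsProbabilityMeasure (μ i)] (i : ι)
    {f : (ι → ℝ) → ℝ} (hf : Measurable f) (hfi : ∀ ω t, f (Function.update ω i t) = f ω)
    {δ : ℝ} {c : ENNReal} (hc : ∀ a, μ i (Metric.ball a δ) ≤ c) :
    Measure.pi μ {ω | ω i ∈ Metric.ball (f ω) δ} ≤ c := by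
  refine pi_le_of_forall_update_preimage_le μ
    (measurableSet_lt ((measurable_pi_apply i).dist hf) measurable_const) i fun ω ↦ ?_
  simpa only [Metric.ball, Set.preimage_ofPred_eq, Function.update_self, hfi] using hc (f ω)

end ProductMeasure

section SetFamily

open MeasureTheory

variable {ι : Type*} (𝓕 : Finset (Finset ι)) (ω : ι → ℝ)

/-- The isolation event: under the weights `ω`, every member of maximum weight of the family `𝓕`
beats every other member by at least `δ`. -/
def HasOptimalityGap (δ : ℝ) : Prop :=
  ∀ S ∈ 𝓕, (∀ T ∈ 𝓕, ∑ j ∈ T, ω j ≤ ∑ j ∈ S, ω j) →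
    ∀ T ∈ 𝓕, T ≠ S → ∑ j ∈ T, ω j + δ ≤ ∑ j ∈ S, ω j

/-- The maximum weight of a member of the family `𝓕`, with junk value `0` when `𝓕` is empty. -/
noncomputable def maxWeight : ℝ := ⨆ S : 𝓕, ∑ j ∈ S.1, ω j

theorem measurable_maxWeight : Measurable (maxWeight 𝓕) :=
  .iSup fun S ↦ Finset.measurable_sum S.1 fun j _ ↦ measurable_pi_apply j

variable {𝓕 ω}

theorem sum_le_maxWeight {S : Finset ι} (hS : S ∈ 𝓕) : ∑ j ∈ S, ω j ≤ maxWeight 𝓕 ω :=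
  le_ciSup (f := fun S : 𝓕 ↦ ∑ j ∈ S.1, ω j) (Set.finite_range _).bddAbove ⟨S, hS⟩

theorem maxWeight_le (h𝓕 : 𝓕.Nonempty) {a : ℝ} (ha : ∀ S ∈ 𝓕, ∑ j ∈ S, ω j ≤ a) :
    maxWeight 𝓕 ω ≤ a :=
  have := h𝓕.to_subtype
  ciSup_le fun S ↦ ha S.1 S.2

variable [DecidableEq ι] {i : ι}

theorem maxWeight_update (h𝓕 : ∀ S ∈ 𝓕, i ∉ S) (t : ℝ) :
    maxWeight 𝓕 (Function.update ω i t) = maxWeight 𝓕 ω :=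
  iSup_congr fun S ↦ Finset.sum_update_of_notMem (h𝓕 S.1 S.2) ω t

variable (𝓕 ω i) in
/-- The value of `ω i` at which the heaviest member of `𝓕` containing `i` is exactly as heavy as
the heaviest member avoiding `i`. Members containing `i` enter with `i` removed, so that the
threshold does not depend on `ω i`. -/
noncomputable def threshold : ℝ :=
  maxWeight (𝓕.nonMemberSubfamily i) ω - maxWeight (𝓕.memberSubfamily i) ω

theorem measurable_threshold : Measurable fun ω ↦ threshold 𝓕 ω i :=
  (measurable_maxWeight _).sub (measurable_maxWeight _)

theorem threshold_update (t : ℝ) : threshold 𝓕 (Function.update ω i t) i = threshold 𝓕 ω i := by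
  simp only [threshold, maxWeight_update fun _ hS ↦ (Finset.mem_nonMemberSubfamily.1 hS).2,
    maxWeight_update fun _ hS ↦ (Finset.mem_memberSubfamily.1 hS).2]

theorem add_maxWeight_memberSubfamily_mem_Ioc {S : Finset ι} (hS : S ∈ 𝓕) (hi : i ∈ S) {l m : ℝ}
    (hl : l < ∑ j ∈ S, ω j) (hm : ∀ U ∈ 𝓕, ∑ j ∈ U, ω j ≤ m) :
    ω i + maxWeight (𝓕.memberSubfamily i) ω ∈ Set.Ioc l m := by
  have h_mem : S.erase i ∈ 𝓕.memberSubfamily i :=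
    Finset.mem_memberSubfamily.2 ⟨by rwa [Finset.insert_erase hi], Finset.notMem_erase i S⟩
  have h_upper : maxWeight (𝓕.memberSubfamily i) ω ≤ m - ω i := by
    refine maxWeight_le ⟨_, h_mem⟩ fun U hU ↦ ?_
    obtain ⟨hU, hiU⟩ := Finset.mem_memberSubfamily.1 hU
    linarith [hm _ hU, Finset.sum_insert (f := ω) hiU]
  constructor
  · linarith [sum_le_maxWeight (ω := ω) h_mem, Finset.add_sum_erase S ω hi]
  · linarith

theorem maxWeight_nonMemberSubfamily_mem_Ioc {T : Finset ι} (hT : T ∈ 𝓕) (hi : i ∉ T) {l m : ℝ}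
    (hl : l < ∑ j ∈ T, ω j) (hm : ∀ U ∈ 𝓕, ∑ j ∈ U, ω j ≤ m) :
    maxWeight (𝓕.nonMemberSubfamily i) ω ∈ Set.Ioc l m := by
  have h_mem : T ∈ 𝓕.nonMemberSubfamily i := Finset.mem_nonMemberSubfamily.2 ⟨hT, hi⟩
  exact ⟨hl.trans_le (sum_le_maxWeight h_mem),
    maxWeight_le ⟨T, h_mem⟩ fun U hU ↦ hm U (Finset.mem_nonMemberSubfamily.1 hU).1⟩

theorem mem_ball_threshold {S T : Finset ι} (hS : S ∈ 𝓕) (hT : T ∈ 𝓕) (hiS : i ∈ S) (hiT : i ∉ T)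
    {l m : ℝ} (hlS : l < ∑ j ∈ S, ω j) (hlT : l < ∑ j ∈ T, ω j)
    (hm : ∀ U ∈ 𝓕, ∑ j ∈ U, ω j ≤ m) : ω i ∈ Metric.ball (threshold 𝓕 ω i) (m - l) := by
  obtain ⟨hS_lower, hS_upper⟩ := add_maxWeight_memberSubfamily_mem_Ioc hS hiS hlS hm
  obtain ⟨hT_lower, hT_upper⟩ := maxWeight_nonMemberSubfamily_mem_Ioc hT hiT hlT hm
  rw [Metric.mem_ball, Real.dist_eq, threshold, abs_lt]
  constructor <;> linarith

theorem exists_mem_ball_threshold_of_not_hasOptimalityGap {δ : ℝ}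
    (h : ¬HasOptimalityGap 𝓕 ω δ) : ∃ i, ω i ∈ Metric.ball (threshold 𝓕 ω i) δ := by
  simp only [HasOptimalityGap, not_forall, not_le] at h
  obtain ⟨S, hS, hmax, T, hT, hne, hlt⟩ := h
  set m := ∑ j ∈ S, ω j
  have hTm : m - δ < ∑ j ∈ T, ω j := by linarith
  have hSm : m - δ < m := by linarith [hmax T hT]
  obtain ⟨i, hi⟩ := Finset.symmDiff_nonempty.2 hne
  refine ⟨i, ?_⟩
  rw [← sub_sub_cancel m δ]
  obtain ⟨hiT, hiS⟩ | ⟨hiS, hiT⟩ := Finset.mem_symmDiff.1 hi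
  · exact mem_ball_threshold hT hS hiT hiS hTm hSm hmax
  · exact mem_ball_threshold hS hT hiS hiT hSm hTm hmax

end SetFamily

section Isolation

open MeasureTheory ProbabilityTheory

variable {ι : Type*} [Fintype ι] (𝓕 : Finset (Finset ι))

theorem one_sub_sum_le_pi_hasOptimalityGap (μ : ι → Measure ℝ) [∀ i, IsProbabilityMeasure (μ i)]
    {δ : ℝ} {c : ι → ENNReal} (hc : ∀ i a, μ i (Metric.ball a δ) ≤ c i) :
    1 - ∑ i, c i ≤ Measure.pi μ {ω | HasOptimalityGap 𝓕 ω δ} := by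
  classical
  have h_cover : Set.univ ⊆ {ω | HasOptimalityGap 𝓕 ω δ} ∪
      ⋃ i, {ω : ι → ℝ | ω i ∈ Metric.ball (threshold 𝓕 ω i) δ} := fun ω _ ↦
    or_iff_not_imp_left.2 fun h ↦
      Set.mem_iUnion.2 (exists_mem_ball_threshold_of_not_hasOptimalityGap h)
  rw [tsub_le_iff_right]
  calc 1 = Measure.pi μ Set.univ := measure_univ.symm
    _ ≤ Measure.pi μ {ω | HasOptimalityGap 𝓕 ω δ} +
        Measure.pi μ (⋃ i, {ω | ω i ∈ Metric.ball (threshold 𝓕 ω i) δ}) :=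
      (measure_mono h_cover).trans (measure_union_le _ _)
    _ ≤ Measure.pi μ {ω | HasOptimalityGap 𝓕 ω δ} +
        ∑ i, Measure.pi μ {ω | ω i ∈ Metric.ball (threshold 𝓕 ω i) δ} := by
      gcongr
      exact measure_iUnion_fintype_le _ _
    _ ≤ Measure.pi μ {ω | HasOptimalityGap 𝓕 ω δ} + ∑ i, c i := by
      gcongr with i
      exact pi_setOf_mem_ball_le μ i measurable_threshold (fun _ ↦ threshold_update) (hc i)

theorem cond_volume_Icc_ball_le (a b x r : ℝ) :
    (volume[|Set.Icc a b]) (Metric.ball x r) ≤ ENNReal.ofReal (2 * r) / ENNReal.ofReal (b - a) := by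
  rw [cond_apply measurableSet_Icc, Real.volume_Icc, ← Real.volume_ball, ENNReal.div_eq_inv_mul]
  exact mul_le_mul_right (measure_mono Set.inter_subset_right) _

theorem isolation_lemma_general (w : ι → ℝ) {η ξ : ℝ} (hη : 0 < η) (hξ : 0 ≤ ξ) :
    ENNReal.ofReal (1 - ξ) ≤ Measure.pi (fun i ↦ volume[|Set.Icc (w i) (w i + η)])
      {ω | HasOptimalityGap 𝓕 ω (η * ξ / (2 * Fintype.card ι))} := by
  have (i : ι) : IsProbabilityMeasure (volume[|Set.Icc (w i) (w i + η)]) :=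
    cond_isProbabilityMeasure_of_finite (by simpa using hη) measure_Icc_lt_top.ne
  set δ := η * ξ / (2 * Fintype.card ι)
  have h_union : ∑ _ : ι, ENNReal.ofReal (2 * δ) / ENNReal.ofReal η ≤ ENNReal.ofReal ξ := by
    rw [Finset.sum_const, Finset.card_univ, ← ENNReal.ofReal_div_of_pos hη, ← ENNReal.ofReal_nsmul]
    refine ENNReal.ofReal_le_ofReal ?_
    calc Fintype.card ι • (2 * δ / η) = ξ * (Fintype.card ι / Fintype.card ι) := by
          rw [nsmul_eq_mul]; simp only [δ]; field_simp
      _ ≤ ξ := mul_le_of_le_one_right hξ (div_self_le_one _)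
  calc ENNReal.ofReal (1 - ξ) = 1 - ENNReal.ofReal ξ := by
        rw [ENNReal.ofReal_sub _ hξ, ENNReal.ofReal_one]
    _ ≤ 1 - ∑ _ : ι, ENNReal.ofReal (2 * δ) / ENNReal.ofReal η := tsub_le_tsub_left h_union 1
    _ ≤ _ := one_sub_sum_le_pi_hasOptimalityGap 𝓕 _ fun i a ↦ by
      simpa only [add_sub_cancel_left] using cond_volume_Icc_ball_le (w i) (w i + η) a δ

end Isolation

section Matching

variable (G : SimpleGraph V) [DecidableRel G.Adj]

open Classical in
/-- The matchings of `G` as a family of subsets of the index type of the random weights. -/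
noncomputable def matchingFamily : Finset (Finset {e : Sym2 V // e ∈ G.edgeFinset}) :=
  {S | IsMatchingF G (S.map (.subtype _))}

variable {G}

theorem forall_isMatchingF_iff {p : Finset (Sym2 V) → Prop} :
    (∀ M, IsMatchingF G M → p M) ↔ ∀ S ∈ matchingFamily G, p (S.map (.subtype _)) := by
  simp only [matchingFamily, Finset.mem_filter, Finset.mem_univ, true_and]
  refine ⟨fun h S hS ↦ h _ hS, fun h M hM ↦ ?_⟩
  have hM_map : (M.subtype (· ∈ G.edgeFinset)).map (.subtype _) = M :=
    Finset.subtype_map_of_mem fun _ he ↦ hM.1 he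
  rw [← hM_map] at hM ⊢
  exact h _ hM

theorem mWeight_map_subtype (ω : {e : Sym2 V // e ∈ G.edgeFinset} → ℝ)
    (S : Finset {e : Sym2 V // e ∈ G.edgeFinset}) :
    mWeight G ω (S.map (.subtype _)) = ∑ e ∈ S, ω e := by
  rw [mWeight, Finset.sum_map]
  exact Finset.sum_congr rfl fun e _ ↦ dif_pos e.2

theorem hasOptimalityGap_matchingFamily_iff {ω : {e : Sym2 V // e ∈ G.edgeFinset} → ℝ} {δ : ℝ} :
    HasOptimalityGap (matchingFamily G) ω δ ↔
      ∀ Mstar, IsMatchingF G Mstar →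
        (∀ M, IsMatchingF G M → mWeight G ω M ≤ mWeight G ω Mstar) →
          ∀ M, IsMatchingF G M → M ≠ Mstar → mWeight G ω M + δ ≤ mWeight G ω Mstar := by
  simp only [HasOptimalityGap, forall_isMatchingF_iff, mWeight_map_subtype, ne_eq,
    Finset.map_inj]

end Matching

/-- **Isolation Lemma.** If the weights `w̄_e` are independent and
uniform on `[w_e, w_e + η]`, then with probability at least `1 − ξ`, any maximum
weight matching `M*` beats every other matching by at least `ηξ/(2|E|)`. -/
theorem isolation_lemma
    {V : Type} [Fintype V] [DecidableEq V] (G : SimpleGraph V) [DecidableRel G.Adj]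
    (hbip : G.Colorable 2)
    (w : Sym2 V → ℝ) (η ξ : ℝ) (hη : 0 < η) (hξ : 0 < ξ) :
    ENNReal.ofReal (1 - ξ) ≤
      (MeasureTheory.Measure.pi fun e : {e : Sym2 V // e ∈ G.edgeFinset} =>
          (ENNReal.ofReal η)⁻¹ •
            MeasureTheory.volume.restrict (Set.Icc (w e.1) (w e.1 + η)))
        {ω | ∀ Mstar : Finset (Sym2 V), IsMatchingF G Mstar →
            (∀ M : Finset (Sym2 V), IsMatchingF G M →
              mWeight G ω M ≤ mWeight G ω Mstar) →
            ∀ M : Finset (Sym2 V), IsMatchingF G M → M ≠ Mstar →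
              mWeight G ω M + η * ξ / (2 * (G.edgeFinset.card : ℝ)) ≤
                mWeight G ω Mstar} := by
  simpa only [ProbabilityTheory.cond, Real.volume_Icc, add_sub_cancel_left, Fintype.card_coe,
    hasOptimalityGap_matchingFamily_iff] using
    isolation_lemma_general (matchingFamily G) (fun e ↦ w e.1) hη hξ.le

end EN
end
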